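/- arXiv:0805.2047 — 2 statements merged into one kernel-verified Lean document; each statement's English description precedes it below -/
import Mathlib

section
/- A real number q > 1 belongs to U if and only if for every r > q with ⌈q⌉ = ⌈r⌉ the set U_r' ∖ U_q' is uncountable. -/
/-!
Write `M = ⌈q⌉ - 1` for the largest digit, `α = α(q)` for the quasi-greedy expansion of `1` in base
`q`, and call `M - c_i` the reflection of a sequence `c`. A digit of `c` can be increased (resp.
decreased) in another expansion of the same number exactly when the following tail (resp. its
reflection) has value at least `1`. Hence `c` is univoque iff tails after digits `< M`, and
reflected tails after digits `> 0`, all have value `< 1` (`mem_USeq_iff`). The lemma `parry` turns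
lexicographic bounds on these tails into such bounds on values. Since `α` is an expansion of `1`,
`q ∈ 𝒰` iff `α ∈ 𝒰_q'` (`mem_univBases_iff_alpha`).

*Univoque bases.* Let `q ∈ 𝒰` and let `r > q` have the same largest digit. All proper tails of `α`
and their reflections are strictly smaller than `α`, so there are arbitrarily long prefixes `w` of
`α` none of whose proper suffixes is a prefix (`exists_unbordered`). Let `w⁺` be `w` with its last
digit increased. In any concatenation of the words `w`, `w⁺` and their reflections in which `w⁺` is
followed by a reflected block, `w` by an unreflected one, and symmetrically, every subword of length
`|w|` lies between the reflection of `w⁺` and `w⁺` (`wordLe_block`). As `α` has value `< 1` in base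
`r`, such concatenations are univoque in base `r` once `w` is long enough. Those starting with
`0 w⁺` are not univoque in base `q`, because `w⁺` has `q`-value at least `1`. They are parametrized
injectively by bit sequences, so `𝒰_r' ∖ 𝒰_q'` is uncountable (`not_countable_diff`).

*Other bases.* Integers belong to `𝒰`, so let `q ∉ 𝒰` be a non-integer. For suitable `r > q` close
to `q`, no tail of a sequence in `𝒰_r'` following a digit `< M` exceeds `α` lexicographically. If
`α` is periodic, an excess would occur at the end of a period and leave a remainder too close to `0`
for a univoque sequence (`exists_base_periodic`). If `α` is not periodic, some reflected tail of `α`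
after a nonzero digit has value `> 1`, and a sequence of `𝒰_r'` exceeding `α` would share a long
prefix with `α` and inherit this defect (`exists_base_nonperiodic`). Consequently each sequence in
`𝒰_r' ∖ 𝒰_q'` ends in `α` or in its reflection, and there are only countably many of these
(`countable_diff`).
-/

noncomputable section

/-- The largest integer smaller than `q`, as a natural number (for `q > 1` this is `⌈q⌉ - 1`). -/
def topDigit (q : ℝ) : ℕ := ⌈q⌉.toNat - 1

/-- Greedy digit associated to a remainder `y` : the largest nonnegative integer `b` with
`b < q` and `b ≤ q * y`. -/
def gDigit (q y : ℝ) : ℕ := min (topDigit q) ⌊q * y⌋₊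

/-- Remainders of the greedy algorithm in base `q` starting from `x`. -/
def gRem (q x : ℝ) : ℕ → ℝ
  | 0 => x
  | n + 1 => q * gRem q x n - gDigit q (gRem q x n)

/-- The greedy expansion of `x` in base `q`, `0`-indexed: `greedy q x n` is the digit `b_{n+1}`,
i.e. the largest integer smaller than `q` such that `∑_{i ≤ n} (greedy q x i) / q^(i+1) ≤ x`. -/
def greedy (q x : ℝ) (n : ℕ) : ℕ := gDigit q (gRem q x n)

/-- Quasi-greedy digit associated to a remainder `y` : the largest nonnegative integer `b` with
`b < q` and `b < q * y` (it is `0` when no such integer exists, matching the convention that the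
quasi-greedy expansion of `0` is `0^∞`). -/
def qgDigit (q y : ℝ) : ℕ := min (topDigit q) (⌈q * y⌉.toNat - 1)

/-- Remainders of the quasi-greedy algorithm in base `q` starting from `x`. -/
def qgRem (q x : ℝ) : ℕ → ℝ
  | 0 => x
  | n + 1 => q * qgRem q x n - qgDigit q (qgRem q x n)

/-- The quasi-greedy expansion of `x` in base `q`, `0`-indexed: `quasiGreedy q x n` is the digit
`a_{n+1}`, i.e. the largest integer smaller than `q` with `∑_{i ≤ n} (quasiGreedy q x i) / q^(i+1) < x`
(with the convention `quasiGreedy q 0 = 0^∞`). -/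
def quasiGreedy (q x : ℝ) (n : ℕ) : ℕ := qgDigit q (qgRem q x n)

/-- `alphaSeq q` is the quasi-greedy expansion of `1` in base `q` (`0`-indexed:
`alphaSeq q (i-1) = α_i(q)`). -/
def alphaSeq (q : ℝ) : ℕ → ℕ := quasiGreedy q 1

/-- Strict lexicographic order on digit sequences. -/
def lexLt (a b : ℕ → ℕ) : Prop := ∃ n, (∀ i, i < n → a i = b i) ∧ a n < b n

/-- Lexicographic order on digit sequences. -/
def lexLe (a b : ℕ → ℕ) : Prop := lexLt a b ∨ a = b

/-- `c` is an expansion of `x` in base `q`: the digits are nonnegative integers smaller than `q`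
and `x = ∑_{i≥0} c_i / q^(i+1)`. -/
def IsExpansion (q : ℝ) (c : ℕ → ℕ) (x : ℝ) : Prop :=
  (∀ i, (c i : ℝ) < q) ∧ x = ∑' i : ℕ, (c i : ℝ) / q ^ (i + 1)

/-- The interval `J_q = [0, (⌈q⌉-1)/(q-1)]` of numbers having an expansion in base `q`. -/
def Jset (q : ℝ) : Set ℝ := Set.Icc 0 (((⌈q⌉ : ℝ) - 1) / (q - 1))

/-- `USet q` is the set `𝒰_q` of numbers `x ∈ J_q` having a unique expansion in base `q`. -/
def USet (q : ℝ) : Set ℝ := {x | x ∈ Jset q ∧ ∃! c, IsExpansion q c x}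

/-- `USeq q` is the set `𝒰_q'` of univoque sequences in base `q`, i.e. sequences that are the
unique expansion in base `q` of some number. -/
def USeq (q : ℝ) : Set (ℕ → ℕ) :=
  {c | ∃ x, IsExpansion q c x ∧ ∀ c', IsExpansion q c' x → c' = c}

/-- The set `𝒰` of univoque bases: `q > 1` such that `1` has a unique expansion in base `q`. -/
def UnivBases : Set ℝ := {q | 1 < q ∧ ∃! c, IsExpansion q c 1}

/-- The set `𝒱_q`: numbers `x ∈ J_q` whose quasi-greedy expansion `(a_i)` satisfies
`overline{a_{n+1} a_{n+2} …} ≤ α_1 α_2 …` whenever `a_n > 0`. -/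
def VSet (q : ℝ) : Set ℝ :=
  {x | x ∈ Jset q ∧ ∀ n, 0 < quasiGreedy q x n →
    lexLe (fun i => topDigit q - quasiGreedy q x (n + 1 + i)) (alphaSeq q)}

/-- `VSeq q` is the set `𝒱_q'` of quasi-greedy expansions of elements of `𝒱_q`. -/
def VSeq (q : ℝ) : Set (ℕ → ℕ) := (fun x => quasiGreedy q x) '' VSet q

/-- The set `𝒱` of bases `q > 1` with `overline{α_{k+1} α_{k+2} …} ≤ α_1 α_2 …` for all `k ≥ 1`. -/
def VBases : Set ℝ :=
  {q | 1 < q ∧ ∀ k, 1 ≤ k → lexLe (fun i => topDigit q - alphaSeq q (k + i)) (alphaSeq q)}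

/-- A digit sequence is infinite if it has infinitely many nonzero terms. -/
def InfiniteSeq (c : ℕ → ℕ) : Prop := ∀ N, ∃ i, N ≤ i ∧ c i ≠ 0

/-- A digit sequence is ultimately periodic if some tail of it is periodic. -/
def UltimatelyPeriodic (c : ℕ → ℕ) : Prop := ∃ n p, 0 < p ∧ ∀ i, n ≤ i → c (i + p) = c i

end


/-! ### Values of digit sequences -/

/-- The number `∑ c_i / q^(i+1)` represented by the digit sequence `c` in base `q`. -/
noncomputable def val (q : ℝ) (c : ℕ → ℕ) : ℝ := ∑' i : ℕ, (c i : ℝ) / q ^ (i + 1)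

/-- The contribution of the first `n` digits of `c` to `val q c`. -/
noncomputable def psum (q : ℝ) (c : ℕ → ℕ) (n : ℕ) : ℝ :=
  ∑ i ∈ Finset.range n, (c i : ℝ) / q ^ (i + 1)

/-- The sequence obtained from `c` by deleting its first `n` digits. -/
def tail (c : ℕ → ℕ) (n : ℕ) : ℕ → ℕ := fun i => c (n + i)

/-- The reflection `M - c_i` of a sequence with digits in `{0, …, M}`. -/
def mirror (M : ℕ) (c : ℕ → ℕ) : ℕ → ℕ := fun i => M - c i

lemma tail_tail (c : ℕ → ℕ) (a b : ℕ) : tail (tail c a) b = tail c (a + b) := by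
  ext i; simp [tail, add_assoc]

lemma mirror_le (M : ℕ) (c : ℕ → ℕ) (i : ℕ) : mirror M c i ≤ M := Nat.sub_le _ _

lemma mirror_mirror {M : ℕ} {c : ℕ → ℕ} (hc : ∀ i, c i ≤ M) : mirror M (mirror M c) = c := by
  ext i; have := hc i; simp only [mirror]; omega

lemma psum_succ (q : ℝ) (c : ℕ → ℕ) (n : ℕ) :
    psum q c (n + 1) = psum q c n + (c n : ℝ) / q ^ (n + 1) := Finset.sum_range_succ _ _

lemma psum_congr (q : ℝ) {c d : ℕ → ℕ} {n : ℕ} (h : ∀ i < n, c i = d i) :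
    psum q c n = psum q d n := by
  refine Finset.sum_congr rfl fun i hi => ?_
  rw [h i (Finset.mem_range.1 hi)]

lemma hasSum_top {q : ℝ} (hq : 1 < q) (M : ℕ) :
    HasSum (fun i : ℕ => (M : ℝ) / q ^ (i + 1)) (M / (q - 1)) := by
  have h0 : (0 : ℝ) < q := by linarith
  have h := (hasSum_geometric_of_lt_one (inv_nonneg.2 h0.le) (inv_lt_one_of_one_lt₀ hq)).mul_left
    ((M : ℝ) / q)
  have h1 : q - 1 ≠ 0 := by linarith
  have e1 : (fun i : ℕ => (M : ℝ) / q ^ (i + 1)) = fun i : ℕ => (M : ℝ) / q * q⁻¹ ^ i := by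
    ext i; rw [pow_succ, inv_pow]; field_simp
  have e2 : (M : ℝ) / (q - 1) = M / q * (1 - q⁻¹)⁻¹ := by
    have : (1 - q⁻¹) = (q - 1) / q := by field_simp
    rw [this]; field_simp
  rw [e1, e2]; exact h

lemma summable_digits {q : ℝ} (hq : 1 < q) {M : ℕ} {c : ℕ → ℕ} (hc : ∀ i, c i ≤ M) :
    Summable (fun i : ℕ => (c i : ℝ) / q ^ (i + 1)) := by
  have h0 : (0 : ℝ) < q := by linarith
  refine Summable.of_nonneg_of_le (fun i => by positivity) (fun i => ?_) (hasSum_top hq M).summable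
  have : (c i : ℝ) ≤ M := by exact_mod_cast hc i
  gcongr

lemma val_nonneg {q : ℝ} (hq : 1 < q) (c : ℕ → ℕ) : 0 ≤ val q c := by
  have h0 : (0 : ℝ) < q := by linarith
  exact tsum_nonneg fun i => by positivity

lemma val_le {q : ℝ} (hq : 1 < q) {M : ℕ} {c : ℕ → ℕ} (hc : ∀ i, c i ≤ M) :
    val q c ≤ M / (q - 1) := by
  have h0 : (0 : ℝ) < q := by linarith
  rw [← (hasSum_top hq M).tsum_eq]
  refine Summable.tsum_le_tsum (fun i => ?_) (summable_digits hq hc) (hasSum_top hq M).summable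
  have : (c i : ℝ) ≤ M := by exact_mod_cast hc i
  gcongr

lemma val_mirror {q : ℝ} (hq : 1 < q) {M : ℕ} {c : ℕ → ℕ} (hc : ∀ i, c i ≤ M) :
    val q (mirror M c) = M / (q - 1) - val q c := by
  have h := (hasSum_top hq M).sub (summable_digits hq hc).hasSum
  rw [val, val, ← h.tsum_eq]
  congr 1; ext i
  rw [mirror, Nat.cast_sub (hc i), sub_div]

lemma val_split {q : ℝ} (hq : 1 < q) {M : ℕ} {c : ℕ → ℕ} (hc : ∀ i, c i ≤ M) (n : ℕ) :
    val q c = psum q c n + val q (tail c n) / q ^ n := by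
  have h0 : (0 : ℝ) < q := by linarith
  rw [val, ← (summable_digits hq hc).sum_add_tsum_nat_add n, psum, val, ← tsum_div_const]
  congr 2; ext i
  rw [tail, add_comm n i, div_div, ← pow_add]
  congr 2; ring

/-- Splitting off the digit at place `n` together with everything before it. -/
lemma val_split_digit {q : ℝ} (hq : 1 < q) {M : ℕ} {c : ℕ → ℕ} (hc : ∀ i, c i ≤ M) (n : ℕ) :
    val q c = psum q c n + (c n + val q (tail c (n + 1))) / q ^ (n + 1) := by
  rw [val_split hq hc (n + 1), psum_succ]; ring

lemma psum_of_rem {q : ℝ} (hq : 1 < q) {c : ℕ → ℕ} {y : ℕ → ℝ}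
    (hy : ∀ n, y (n + 1) = q * y n - c n) (n : ℕ) : psum q c n = y 0 - y n / q ^ n := by
  have h0 : (0 : ℝ) < q := by linarith
  induction n with
  | zero => simp [psum]
  | succ n ih =>
    rw [psum_succ, ih, hy]; field_simp; ring

lemma val_of_rem {q : ℝ} (hq : 1 < q) {M : ℕ} {c : ℕ → ℕ} (hc : ∀ i, c i ≤ M) {y : ℕ → ℝ} {B : ℝ}
    (hy : ∀ n, y (n + 1) = q * y n - c n) (h0 : ∀ n, 0 ≤ y n) (hB : ∀ n, y n ≤ B) :
    val q c = y 0 := by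
  have hq0 : (0 : ℝ) < q := by linarith
  have h1 := (summable_digits hq hc).hasSum.tendsto_sum_nat
  have h2 : Filter.Tendsto (fun n => y n / q ^ n) Filter.atTop (nhds 0) := by
    have h3 : Filter.Tendsto (fun n : ℕ => B / q ^ n) Filter.atTop (nhds 0) :=
      (tendsto_pow_atTop_atTop_of_one_lt hq).const_div_atTop B
    refine squeeze_zero (fun n => div_nonneg (h0 n) (by positivity)) (fun n => ?_) h3
    have := hB n
    gcongr
  have h4 : Filter.Tendsto (fun n => psum q c n) Filter.atTop (nhds (y 0)) := by
    simp_rw [psum_of_rem hq hy]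
    simpa using h2.const_sub (y 0)
  exact tendsto_nhds_unique h1 h4

/-- `M` is the largest digit in base `q > 1`. -/
structure IsTopDigit (M : ℕ) (q : ℝ) : Prop where
  one_lt : 1 < q
  lt : (M : ℝ) < q
  le : q ≤ M + 1

lemma IsTopDigit.pos {M : ℕ} {q : ℝ} (h : IsTopDigit M q) : 0 < M := by
  have := h.one_lt; have := h.le
  have : (0 : ℝ) < M := by linarith
  exact_mod_cast this

lemma IsTopDigit.one_le {M : ℕ} {q : ℝ} (h : IsTopDigit M q) : 1 ≤ (M : ℝ) / (q - 1) := by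
  have := h.one_lt; have := h.le
  rw [le_div_iff₀ (by linarith)]; linarith

lemma IsTopDigit.digit_lt_iff {M : ℕ} {q : ℝ} (h : IsTopDigit M q) (k : ℕ) : (k : ℝ) < q ↔ k ≤ M := by
  constructor
  · intro hk
    have : (k : ℝ) < (M + 1 : ℕ) := by push_cast; linarith [h.le]
    exact Nat.lt_succ_iff.1 (by exact_mod_cast this)
  · intro hk
    have : (k : ℝ) ≤ M := by exact_mod_cast hk
    linarith [h.lt]

lemma isExpansion_iff {M : ℕ} {q : ℝ} (h : IsTopDigit M q) (c : ℕ → ℕ) (x : ℝ) :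
    IsExpansion q c x ↔ (∀ i, c i ≤ M) ∧ x = val q c := by
  simp only [IsExpansion, h.digit_lt_iff, val]

/-- Every point of `[0, M/(q-1)]` has an expansion: the greedy algorithm never leaves this
interval. -/
lemma exists_expansion {M : ℕ} {q : ℝ} (h : IsTopDigit M q) {x : ℝ} (hx0 : 0 ≤ x)
    (hx1 : x ≤ M / (q - 1)) : ∃ c : ℕ → ℕ, (∀ i, c i ≤ M) ∧ val q c = x := by
  have hq := h.one_lt
  let dig : ℝ → ℕ := fun y => min M ⌊q * y⌋₊
  let y : ℕ → ℝ := fun n => Nat.rec x (fun _ z => q * z - dig z) n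
  have hy : ∀ n, y (n + 1) = q * y n - dig (y n) := fun n => rfl
  have hb : ∀ n, 0 ≤ y n ∧ y n ≤ M / (q - 1) := by
    intro n
    induction n with
    | zero => exact ⟨hx0, hx1⟩
    | succ n ih =>
      obtain ⟨h1, h2⟩ := ih
      have hqy : 0 ≤ q * y n := mul_nonneg (by linarith) h1
      rw [hy]
      have hle : ((dig (y n) : ℕ) : ℝ) ≤ ⌊q * y n⌋₊ := by exact_mod_cast min_le_right _ _
      refine ⟨by linarith [Nat.floor_le hqy], ?_⟩
      rcases le_total M ⌊q * y n⌋₊ with hM | hM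
      · have : dig (y n) = M := min_eq_left hM
        rw [this]
        have h3 : (M : ℝ) / (q - 1) = q * (M / (q - 1)) - M := by
          have : q - 1 ≠ 0 := by linarith
          field_simp; ring
        rw [h3]; gcongr
      · have : dig (y n) = ⌊q * y n⌋₊ := min_eq_right hM
        rw [this]
        linarith [Nat.lt_floor_add_one (q * y n), h.one_le]
  refine ⟨fun n => dig (y n), fun i => min_le_left _ _, ?_⟩
  exact val_of_rem hq (M := M) (fun i => min_le_left _ _) hy (fun n => (hb n).1) (fun n => (hb n).2)

/-! ### Univoque sequences -/

lemma mem_USeq_iff_forall {M : ℕ} {q : ℝ} (h : IsTopDigit M q) (c : ℕ → ℕ) :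
    c ∈ USeq q ↔ (∀ i, c i ≤ M) ∧ ∀ c' : ℕ → ℕ, (∀ i, c' i ≤ M) → val q c' = val q c → c' = c := by
  simp only [USeq, Set.mem_ofPred_eq, isExpansion_iff h]
  constructor
  · rintro ⟨x, ⟨h1, rfl⟩, h2⟩
    exact ⟨h1, fun c' h3 h4 => h2 c' ⟨h3, h4.symm⟩⟩
  · rintro ⟨h1, h2⟩
    exact ⟨_, ⟨h1, rfl⟩, fun c' h3 => h2 c' h3.1 h3.2.symm⟩

/-- If the digit at place `n` can be changed to `e` with the new remainder still in
`[0, M/(q-1)]`, then `c` is not univoque. -/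
lemma not_USeq_of_change {M : ℕ} {q : ℝ} (h : IsTopDigit M q) {c : ℕ → ℕ} (hc : c ∈ USeq q) {n e : ℕ}
    (he : e ≤ M) (hne : e ≠ c n) (h0 : 0 ≤ c n + val q (tail c (n + 1)) - e)
    (h1 : c n + val q (tail c (n + 1)) - e ≤ M / (q - 1)) : False := by
  have hq := h.one_lt
  rw [mem_USeq_iff_forall h] at hc
  obtain ⟨hcM, huniq⟩ := hc
  obtain ⟨d, hd, hdv⟩ := exists_expansion h h0 h1
  let c' : ℕ → ℕ := fun i => if i < n then c i else if i = n then e else d (i - (n + 1))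
  have hc'M : ∀ i, c' i ≤ M := by
    intro i; simp only [c']; split_ifs
    · exact hcM i
    · exact he
    · exact hd _
  have hc'n : c' n = e := by simp [c']
  have ht : tail c' (n + 1) = d := by
    ext i
    simp only [tail, c']
    rw [if_neg (by omega), if_neg (by omega)]
    congr 1; omega
  have := huniq c' hc'M (by
    rw [val_split_digit hq hc'M n, val_split_digit hq hcM n, hc'n, ht, hdv,
      psum_congr q (c := c') (d := c) (fun i hi => by simp [c', hi])]
    ring)
  exact hne (by rw [← this, hc'n])

/-- Univoque sequences are those for which no digit can be increased or decreased. -/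
lemma mem_USeq_iff {M : ℕ} {q : ℝ} (h : IsTopDigit M q) (c : ℕ → ℕ) :
    c ∈ USeq q ↔ (∀ i, c i ≤ M) ∧ ∀ n, (c n < M → val q (tail c (n + 1)) < 1) ∧
      (0 < c n → M / (q - 1) - val q (tail c (n + 1)) < 1) := by
  have hq := h.one_lt
  constructor
  · intro hc
    have hcM := ((mem_USeq_iff_forall h c).1 hc).1
    refine ⟨hcM, fun n => ⟨fun hn => ?_, fun hn => ?_⟩⟩
    · by_contra! hv
      have hle := val_le hq (M := M) (c := tail c (n + 1)) (fun i => hcM _)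
      exact not_USeq_of_change h hc (n := n) (e := c n + 1) hn (by omega) (by push_cast; linarith)
        (by push_cast; linarith)
    · by_contra! hv
      have hnn := val_nonneg hq (tail c (n + 1))
      have he : ((c n - 1 : ℕ) : ℝ) = c n - 1 := by
        rw [Nat.cast_sub hn]; simp
      exact not_USeq_of_change h hc (n := n) (e := c n - 1) ((Nat.sub_le _ _).trans (hcM n))
        (by omega) (by rw [he]; linarith) (by rw [he]; linarith)
  · rintro ⟨hcM, H⟩
    rw [mem_USeq_iff_forall h]
    refine ⟨hcM, fun c' hc' hv => ?_⟩
    by_contra hne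
    have hex : ∃ n, c' n ≠ c n := by
      by_contra! hall; exact hne (funext hall)
    classical
    let n := Nat.find hex
    have hn : c' n ≠ c n := Nat.find_spec hex
    have hlt : ∀ i < n, c' i = c i := fun i hi => not_not.1 (Nat.find_min hex hi)
    rw [val_split_digit hq hc' n, val_split_digit hq hcM n, psum_congr q hlt, add_right_inj,
      div_left_inj' (by positivity)] at hv
    have hb1 := val_nonneg hq (tail c' (n + 1))
    have hb2 := val_le hq (M := M) (c := tail c' (n + 1)) (fun i => hc' _)
    rcases lt_or_gt_of_ne hn with hlt' | hgt
    · have h1 := (H n).2 (by omega)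
      have : (c' n : ℝ) + 1 ≤ c n := by exact_mod_cast hlt'
      linarith
    · have h1 := (H n).1 (lt_of_lt_of_le hgt (hc' n))
      have : (c n : ℝ) + 1 ≤ c' n := by exact_mod_cast hgt
      linarith

lemma mirror_mem_USeq {M : ℕ} {q : ℝ} (h : IsTopDigit M q) {c : ℕ → ℕ} (hc : c ∈ USeq q) :
    mirror M c ∈ USeq q := by
  rw [mem_USeq_iff h] at hc ⊢
  obtain ⟨hcM, H⟩ := hc
  refine ⟨mirror_le M c, fun n => ?_⟩
  have ht : tail (mirror M c) (n + 1) = mirror M (tail c (n + 1)) := rfl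
  rw [ht, val_mirror h.one_lt (c := tail c (n + 1)) (fun i => hcM _)]
  have := hcM n
  refine ⟨fun hn => (H n).2 (by simp only [mirror] at hn; omega), fun hn => ?_⟩
  rw [sub_sub_cancel]
  exact (H n).1 (by simp only [mirror] at hn; omega)

/-- Lexicographic criterion of Parry type. Suppose that all finite truncations of `δ` have value
less than `1`, and that each tail of `c` following a digit `< M` is lexicographically smaller than
`δ` or has value `< 1` anyway. Then all these tails have value `< 1`: otherwise the excess over `1`
would be multiplied by at least `q` again and again along a sequence of tails, whereas the values
are bounded. -/
lemma parry {M : ℕ} {q : ℝ} (hq : 1 < q) {c δ : ℕ → ℕ} (hc : ∀ i, c i ≤ M) (hδM : ∀ i, δ i ≤ M)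
    (hδ : ∀ n, psum q δ n < 1)
    (H : ∀ n, c n < M → val q (tail c (n + 1)) < 1 ∨ lexLt (tail c (n + 1)) δ) :
    ∀ n, c n < M → val q (tail c (n + 1)) < 1 := by
  have step : ∀ n, c n < M → 1 ≤ val q (tail c (n + 1)) → ∃ n', c n' < M ∧
      0 < val q (tail c (n' + 1)) - 1 ∧
      q * (val q (tail c (n + 1)) - 1) ≤ val q (tail c (n' + 1)) - 1 := by
    intro n hn hv
    rcases H n hn with h | ⟨j, hj, hlt⟩
    · linarith
    refine ⟨n + 1 + j, lt_of_lt_of_le hlt (hδM j), ?_⟩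
    have h1 := val_split_digit hq (M := M) (c := tail c (n + 1)) (fun i => hc _) j
    rw [tail_tail, psum_congr q hj] at h1
    have h2 := hδ (j + 1)
    rw [psum_succ] at h2
    have h3 : (tail c (n + 1) j : ℝ) + 1 ≤ δ j := by exact_mod_cast hlt
    rw [← add_assoc] at h1
    have hQ : 0 < q ^ (j + 1) := by positivity
    set V := val q (tail c (n + 1 + j + 1)) with hV
    have h4 : val q (tail c (n + 1)) - 1 < (V - 1) / q ^ (j + 1) := by
      have : (tail c (n + 1) j + V) / q ^ (j + 1) ≤ (δ j + (V - 1)) / q ^ (j + 1) := by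
        gcongr ?_ / _; linarith
      rw [add_div (δ j : ℝ)] at this
      linarith
    rw [lt_div_iff₀ hQ] at h4
    have h5 : q ≤ q ^ (j + 1) := le_self_pow₀ hq.le (by omega)
    have h6 : 0 ≤ val q (tail c (n + 1)) - 1 := by linarith
    constructor
    · nlinarith
    · nlinarith
  intro n hn
  by_contra! hv
  obtain ⟨n₁, hn₁, hpos, -⟩ := step n hn hv
  have iter : ∀ K : ℕ, ∃ n', c n' < M ∧
      q ^ K * (val q (tail c (n₁ + 1)) - 1) ≤ val q (tail c (n' + 1)) - 1 := by
    intro K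
    induction K with
    | zero => exact ⟨n₁, hn₁, by simp⟩
    | succ K ih =>
      obtain ⟨a, ha, hle⟩ := ih
      have : 0 < q ^ K * (val q (tail c (n₁ + 1)) - 1) := by positivity
      obtain ⟨b, hb, -, hle'⟩ := step a ha (by linarith)
      refine ⟨b, hb, le_trans ?_ hle'⟩
      rw [pow_succ, mul_comm (q ^ K), mul_assoc]
      gcongr
  obtain ⟨K, hK⟩ := pow_unbounded_of_one_lt
    ((M / (q - 1)) / (val q (tail c (n₁ + 1)) - 1)) hq
  obtain ⟨a, -, hle⟩ := iter K
  rw [div_lt_iff₀ hpos] at hK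
  have := val_le hq (M := M) (c := tail c (a + 1)) (fun i => hc _)
  linarith

/-! ### The quasi-greedy expansion of `1` -/

lemma topDigit_eq {M : ℕ} {q : ℝ} (h : IsTopDigit M q) : topDigit q = M := by
  have : ⌈q⌉ = (M : ℤ) + 1 := by
    rw [Int.ceil_eq_iff]; push_cast
    exact ⟨by linarith [h.lt], h.le⟩
  rw [topDigit, this]; omega

lemma isTopDigit_topDigit {q : ℝ} (hq : 1 < q) : IsTopDigit (topDigit q) q := by
  have h1 : (1 : ℤ) < ⌈q⌉ := by rw [Int.lt_ceil]; exact_mod_cast hq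
  have h2 : ((topDigit q : ℕ) : ℤ) = ⌈q⌉ - 1 := by rw [topDigit]; omega
  have h3 : ((topDigit q : ℕ) : ℝ) = ⌈q⌉ - 1 := by exact_mod_cast h2
  exact ⟨hq, by rw [h3]; linarith [Int.ceil_lt_add_one q], by rw [h3]; linarith [Int.le_ceil q]⟩

lemma qgRem_succ (q : ℝ) (n : ℕ) : qgRem q 1 (n + 1) = q * qgRem q 1 n - alphaSeq q n := rfl

lemma alphaSeq_le {M : ℕ} {q : ℝ} (h : IsTopDigit M q) (n : ℕ) : alphaSeq q n ≤ M := by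
  rw [← topDigit_eq h]; exact min_le_left _ _

/-- The remainders of the quasi-greedy expansion of `1` stay in `(0, 1]`. -/
lemma qgRem_mem {M : ℕ} {q : ℝ} (h : IsTopDigit M q) (n : ℕ) :
    0 < qgRem q 1 n ∧ qgRem q 1 n ≤ 1 := by
  induction n with
  | zero => simp [qgRem]
  | succ n ih =>
    obtain ⟨h0, h1⟩ := ih
    have hq := h.one_lt
    set y := qgRem q 1 n with hy
    have hpos : 0 < ⌈q * y⌉ := Int.ceil_pos.2 (by positivity)
    have hle : ⌈q * y⌉ ≤ (M : ℤ) + 1 := by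
      rw [Int.ceil_le]; push_cast; nlinarith [h.le]
    have hd : alphaSeq q n = ⌈q * y⌉.toNat - 1 := by
      rw [alphaSeq, quasiGreedy, qgDigit, topDigit_eq h, ← hy]
      exact min_eq_right (by omega)
    have hd' : ((alphaSeq q n : ℕ) : ℝ) = ⌈q * y⌉ - 1 := by
      have : ((alphaSeq q n : ℕ) : ℤ) = ⌈q * y⌉ - 1 := by rw [hd]; omega
      exact_mod_cast this
    rw [qgRem_succ, hd', ← hy]
    constructor <;> linarith [Int.ceil_lt_add_one (q * y), Int.le_ceil (q * y)]

lemma psum_alpha {M : ℕ} {q : ℝ} (h : IsTopDigit M q) (n : ℕ) :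
    psum q (alphaSeq q) n = 1 - qgRem q 1 n / q ^ n :=
  psum_of_rem h.one_lt (qgRem_succ q) n

lemma psum_alpha_lt {M : ℕ} {q : ℝ} (h : IsTopDigit M q) (n : ℕ) :
    psum q (alphaSeq q) n < 1 := by
  have hq := h.one_lt
  rw [psum_alpha h]
  have := (qgRem_mem h n).1
  have : 0 < qgRem q 1 n / q ^ n := by positivity
  linarith

lemma val_tail_alpha {M : ℕ} {q : ℝ} (h : IsTopDigit M q) (n : ℕ) :
    val q (tail (alphaSeq q) n) = qgRem q 1 n := by
  have := val_of_rem h.one_lt (M := M) (c := tail (alphaSeq q) n) (fun i => alphaSeq_le h _)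
    (y := fun i => qgRem q 1 (n + i)) (B := 1) (fun i => qgRem_succ q (n + i))
    (fun i => (qgRem_mem h _).1.le) (fun i => (qgRem_mem h _).2)
  simpa using this

lemma val_alpha {M : ℕ} {q : ℝ} (h : IsTopDigit M q) : val q (alphaSeq q) = 1 := by
  have := val_tail_alpha h 0
  have e : tail (alphaSeq q) 0 = alphaSeq q := by ext i; simp [tail]
  rwa [e] at this

/-- If `q` is not an integer, a remainder `1` cannot come after the digit `M`. -/
lemma alphaSeq_lt_of_rem {M : ℕ} {q : ℝ} (h : IsTopDigit M q) (hq : q < M + 1) {n : ℕ}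
    (hn : qgRem q 1 (n + 1) = 1) : alphaSeq q n < M := by
  refine lt_of_le_of_ne (alphaSeq_le h n) fun he => ?_
  rw [qgRem_succ, he] at hn
  have := (qgRem_mem h n).2
  nlinarith [h.one_lt]

lemma alphaSeq_of_rem_eq_one {M : ℕ} {q : ℝ} (h : IsTopDigit M q) {n : ℕ}
    (hn : qgRem q 1 n = 1) : alphaSeq q n = M := by
  have h1 := (qgRem_mem h (n + 1)).2
  rw [qgRem_succ, hn] at h1
  have : (M : ℝ) < (alphaSeq q n + 1 : ℕ) := by push_cast; linarith [h.lt]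
  have : M < alphaSeq q n + 1 := by exact_mod_cast this
  have := alphaSeq_le h n
  omega

lemma alphaSeq_zero {M : ℕ} {q : ℝ} (h : IsTopDigit M q) : alphaSeq q 0 = M :=
  alphaSeq_of_rem_eq_one h rfl

lemma alphaSeq_periodic {q : ℝ} {p : ℕ} (hp : qgRem q 1 p = 1) (i : ℕ) :
    alphaSeq q (p + i) = alphaSeq q i := by
  have : ∀ i, qgRem q 1 (p + i) = qgRem q 1 i := by
    intro i
    induction i with
    | zero => simpa [qgRem] using hp
    | succ i ih => rw [← add_assoc, qgRem, ih, qgRem]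
  simp only [alphaSeq, quasiGreedy, this]

lemma lexLt_trichotomy (a b : ℕ → ℕ) : lexLt a b ∨ a = b ∨ lexLt b a := by
  classical
  by_cases hab : a = b
  · exact Or.inr (Or.inl hab)
  have hex : ∃ n, a n ≠ b n := by
    by_contra! hall; exact hab (funext hall)
  have hlt : ∀ i < Nat.find hex, a i = b i := fun i hi => not_not.1 (Nat.find_min hex hi)
  rcases lt_or_gt_of_ne (Nat.find_spec hex) with h | h
  · exact Or.inl ⟨_, hlt, h⟩
  · exact Or.inr (Or.inr ⟨_, fun i hi => (hlt i hi).symm, h⟩)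

/-- A sequence `d` first exceeding `δ` at place `j` has at least the value of
`δ_0 … δ_{j-1} (δ_j + 1)` followed by the digits of `d` after place `j`. -/
lemma le_val_of_gt {M : ℕ} {q : ℝ} (hq : 1 < q) {d δ : ℕ → ℕ} (hd : ∀ i, d i ≤ M) {j : ℕ}
    (hj : ∀ i < j, δ i = d i) (hlt : δ j < d j) :
    psum q δ (j + 1) + (1 + val q (tail d (j + 1))) / q ^ (j + 1) ≤ val q d := by
  rw [val_split_digit hq hd j, psum_succ, psum_congr q hj, add_assoc, ← add_div]
  have : (δ j : ℝ) + 1 ≤ d j := by exact_mod_cast hlt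
  gcongr ?_ + ?_ / _
  · exact le_rfl
  · linarith

lemma lexLt_alpha_of_val_lt {M : ℕ} {q : ℝ} (h : IsTopDigit M q) {d : ℕ → ℕ} (hd : ∀ i, d i ≤ M)
    (hv : val q d < 1) : lexLt d (alphaSeq q) := by
  have hq := h.one_lt
  rcases lexLt_trichotomy d (alphaSeq q) with h1 | h1 | ⟨j, hj, hlt⟩
  · exact h1
  · rw [h1, val_alpha h] at hv; linarith
  · have h1 := le_val_of_gt hq hd hj hlt
    have h2 := val_nonneg hq (tail d (j + 1))
    have h3 := (qgRem_mem h (j + 1)).2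
    rw [psum_alpha h] at h1
    have : qgRem q 1 (j + 1) / q ^ (j + 1) ≤ (1 + val q (tail d (j + 1))) / q ^ (j + 1) := by
      gcongr; linarith
    linarith

lemma mem_univBases_iff_alpha {M : ℕ} {q : ℝ} (h : IsTopDigit M q) :
    q ∈ UnivBases ↔ alphaSeq q ∈ USeq q := by
  have hα : IsExpansion q (alphaSeq q) 1 :=
    (isExpansion_iff h _ _).2 ⟨alphaSeq_le h, (val_alpha h).symm⟩
  constructor
  · rintro ⟨-, c, -, hc⟩
    exact ⟨1, hα, fun c' hc' => (hc c' hc').trans (hc _ hα).symm⟩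
  · rintro ⟨x, hx, hu⟩
    have : x = 1 := hx.2.trans hα.2.symm
    subst this
    exact ⟨h.one_lt, _, hα, hu⟩

/-! ### Bases outside `𝒰` -/

lemma countable_tail_eq (β : ℕ → ℕ) : {c : ℕ → ℕ | ∃ n, tail c n = β}.Countable := by
  have : {c : ℕ → ℕ | ∃ n, tail c n = β} = ⋃ n, {c | tail c n = β} := by ext; simp
  rw [this]
  refine Set.countable_iUnion fun n => ?_
  refine Set.MapsTo.countable_of_injOn (f := fun c (i : Fin n) => c i) (Set.mapsTo_univ _ _) ?_
    Set.countable_univ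
  intro a ha b hb hab
  ext i
  rcases lt_or_ge i n with hi | hi
  · exact congrFun hab ⟨i, hi⟩
  · obtain ⟨k, rfl⟩ := Nat.exists_eq_add_of_le hi
    exact (congrFun ha k).trans (congrFun hb k).symm

/-- If in base `r` all tails of univoque sequences after a digit `< M` are at most the quasi-greedy
expansion `α` of `1` in base `q`, then a sequence in `𝒰_r' ∖ 𝒰_q'` ends in `α` or in its
reflection. -/
lemma countable_diff {M : ℕ} {q r : ℝ} (hq : IsTopDigit M q) (hr : IsTopDigit M r)
    (H : ∀ c ∈ USeq r, ∀ n, c n < M →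
      lexLt (tail c (n + 1)) (alphaSeq q) ∨ tail c (n + 1) = alphaSeq q) :
    (USeq r \ USeq q).Countable := by
  refine ((countable_tail_eq (alphaSeq q)).union
    (countable_tail_eq (mirror M (alphaSeq q)))).mono ?_
  rintro c ⟨hcr, hcq⟩
  have hcM := ((mem_USeq_iff hr c).1 hcr).1
  by_contra hnot
  simp only [Set.mem_union, Set.mem_ofPred_eq, not_or, not_exists] at hnot
  apply hcq
  rw [mem_USeq_iff hq]
  refine ⟨hcM, fun n => ⟨?_, ?_⟩⟩
  · revert n
    refine parry hq.one_lt hcM (alphaSeq_le hq) (psum_alpha_lt hq) fun n hn => Or.inr ?_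
    exact (H c hcr n hn).resolve_right (hnot.1 _)
  · have h1 := parry hq.one_lt (mirror_le M c) (alphaSeq_le hq) (psum_alpha_lt hq)
      fun n hn => Or.inr <|
        (H (mirror M c) (mirror_mem_USeq hr hcr) n hn).resolve_right fun he => by
        refine hnot.2 (n + 1) ?_
        rw [← he, ← mirror_mirror (c := tail c (n + 1)) (fun i => hcM _)]
        rfl
    intro hn
    have h2 := h1 n (by have := hcM n; simp only [mirror]; omega)
    rwa [show tail (mirror M c) (n + 1) = mirror M (tail c (n + 1)) from rfl,
      val_mirror hq.one_lt (c := tail c (n + 1)) (fun i => hcM _)] at h2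

lemma continuousAt_psum {q : ℝ} (hq : 1 < q) (c : ℕ → ℕ) (n : ℕ) :
    ContinuousAt (fun r => psum r c n) q := by
  unfold psum
  have : q ≠ 0 := by linarith
  fun_prop (disch := simp [this])

/-- For `r` close to `q`, a sequence of `r`-value `< 1` cannot exceed `α(q)` at one of the first
`L` places, provided that the remainders there are `< 1`. -/
lemma eventually_word_gt {M : ℕ} {q : ℝ} (h : IsTopDigit M q) (L : ℕ)
    (hL : ∀ j < L, qgRem q 1 (j + 1) < 1) :
    ∀ᶠ r in nhds q, ∀ j < L, 1 < psum r (alphaSeq q) (j + 1) + 1 / r ^ (j + 1) := by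
  have hq := h.one_lt
  refine (Filter.eventually_all_finite (Set.finite_lt_nat L)).2 fun j hj => ?_
  have hq0 : q ≠ 0 := by linarith
  have hc : ContinuousAt (fun r => psum r (alphaSeq q) (j + 1) + 1 / r ^ (j + 1)) q := by
    have := continuousAt_psum hq (alphaSeq q) (j + 1)
    fun_prop (disch := simp [hq0])
  refine hc.eventually_const_lt ?_
  beta_reduce
  rw [psum_alpha h]
  have : qgRem q 1 (j + 1) / q ^ (j + 1) < 1 / q ^ (j + 1) := by
    have := hL j hj
    gcongr
  linarith

lemma not_exceed {M : ℕ} {q r : ℝ} (hr : IsTopDigit M r) {L j : ℕ}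
    (hw : ∀ j < L, 1 < psum r (alphaSeq q) (j + 1) + 1 / r ^ (j + 1)) {d : ℕ → ℕ}
    (hd : ∀ i, d i ≤ M) (hv : val r d < 1) (hj : ∀ i < j, alphaSeq q i = d i)
    (hlt : alphaSeq q j < d j) : L ≤ j := by
  by_contra! hjL
  have hr1 := hr.one_lt
  have h1 := le_val_of_gt hr1 hd hj hlt
  have h2 := hw j hjL
  rw [add_div] at h1
  have : 0 ≤ val r (tail d (j + 1)) / r ^ (j + 1) :=
    div_nonneg (val_nonneg hr1 _) (by positivity)
  linarith

lemma exists_right_of_eventually {M : ℕ} {q : ℝ} (h : IsTopDigit M q) (hq : q < M + 1) {P : ℝ → Prop}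
    (hP : ∀ᶠ r in nhds q, P r) : ∃ r, q < r ∧ IsTopDigit M r ∧ P r := by
  have h1 : ∀ᶠ r in nhdsWithin q (Set.Ioi q), P r := nhdsWithin_le_nhds hP
  have h2 : ∀ᶠ r in nhdsWithin q (Set.Ioi q), r < (M : ℝ) + 1 :=
    nhdsWithin_le_nhds (eventually_lt_nhds hq)
  have h3 : ∀ᶠ r in nhdsWithin q (Set.Ioi q), q < r := self_mem_nhdsWithin
  obtain ⟨r, hr1, hr2, hr3⟩ := (h1.and (h2.and h3)).exists
  exact ⟨r, hr3, ⟨h.one_lt.trans hr3, h.lt.trans hr3, hr2.le⟩, hr1⟩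

lemma one_lt_top {M : ℕ} {q : ℝ} (h : IsTopDigit M q) (hq : q < M + 1) : 1 < (M : ℝ) / (q - 1) := by
  have := h.one_lt
  rw [lt_div_iff₀ (by linarith)]; linarith

/-- The case of a periodic quasi-greedy expansion `α = w^∞`. For `r` slightly larger than `q`, a
tail exceeding `α` must run through copies of `w` and then through `w` with its last digit
increased. After this its `r`-value would have to be almost `0`, whereas univoqueness requires it
to be at least `M/(r-1) - 1`, which is bounded away from `0`. -/
lemma exists_base_periodic {M : ℕ} {q : ℝ} (h : IsTopDigit M q) (hq : q < M + 1)
    (hper : ∃ p, qgRem q 1 (p + 1) = 1) :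
    ∃ r, q < r ∧ IsTopDigit M r ∧ ∀ c ∈ USeq r, ∀ n, c n < M →
      lexLt (tail c (n + 1)) (alphaSeq q) ∨ tail c (n + 1) = alphaSeq q := by
  classical
  have hq1 := h.one_lt
  have hq0 : q ≠ 0 := by linarith
  have hq10 : q - 1 ≠ 0 := by linarith
  let p := Nat.find hper
  have hp : qgRem q 1 (p + 1) = 1 := Nat.find_spec hper
  have hmin : ∀ j < p, qgRem q 1 (j + 1) < 1 := fun j hj =>
    lt_of_le_of_ne (qgRem_mem h _).2 (Nat.find_min hper hj)
  have hev : ∀ᶠ r in nhds q, r ^ (p + 1) * (1 - psum r (alphaSeq q) (p + 1)) - 1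
      < M / (r - 1) - 1 := by
    have hc1 := continuousAt_psum hq1 (alphaSeq q) (p + 1)
    have hc2 : ContinuousAt
        (fun r => r ^ (p + 1) * (1 - psum r (alphaSeq q) (p + 1)) - 1) q := by fun_prop
    have hc3 : ContinuousAt (fun r : ℝ => (M : ℝ) / (r - 1) - 1) q := by
      fun_prop (disch := simp [hq10])
    refine hc2.eventually_lt hc3 ?_
    rw [psum_alpha h, hp, sub_sub_cancel, mul_one_div_cancel (by positivity)]
    linarith [one_lt_top h hq]
  obtain ⟨r, hqr, hr, hw, hε⟩ := exists_right_of_eventually h hq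
    ((eventually_word_gt h p hmin).and hev)
  refine ⟨r, hqr, hr, fun c hc => ?_⟩
  rw [mem_USeq_iff hr] at hc
  obtain ⟨hcM, H⟩ := hc
  have hr1 := hr.one_lt
  have key : ∀ j n, c n < M → (∀ i < j, alphaSeq q i = tail c (n + 1) i) →
      alphaSeq q j < tail c (n + 1) j → False := by
    intro j
    induction j using Nat.strong_induction_on with
    | _ j ih =>
    intro n hn hj hlt
    have hv := (H n).1 hn
    have hpj := not_exceed hr hw (d := tail c (n + 1)) (fun i => hcM _) hv hj hlt
    rcases hpj.eq_or_lt with hpj | hpj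
    · subst hpj
      have h1 := le_val_of_gt hr1 (d := tail c (n + 1)) (fun i => hcM _) hj hlt
      have h2 := (H (n + 1 + p)).2 (lt_of_le_of_lt (Nat.zero_le _) hlt)
      rw [tail_tail, ← add_assoc] at h1
      have hP : 0 < r ^ (p + 1) := by positivity
      have h3 : (1 + val r (tail c (n + 1 + p + 1))) / r ^ (p + 1)
          < 1 - psum r (alphaSeq q) (p + 1) := by linarith
      rw [div_lt_iff₀ hP] at h3
      linarith
    · have hp' := hj p hpj
      refine ih (j - (p + 1)) (by omega) (n + 1 + p) ?_ ?_ ?_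
      · have := alphaSeq_lt_of_rem h hq hp
        rw [hp'] at this
        exact this
      · intro i hi
        have := hj (p + 1 + i) (by omega)
        rw [alphaSeq_periodic hp] at this
        rw [this]; simp only [tail]; congr 1; omega
      · obtain ⟨i, rfl⟩ := Nat.exists_eq_add_of_le (show p + 1 ≤ j from hpj)
        rw [alphaSeq_periodic hp] at hlt
        rw [Nat.add_sub_cancel_left]
        convert hlt using 1
        simp only [tail]; congr 1; omega
  intro n hn
  rcases lexLt_trichotomy (tail c (n + 1)) (alphaSeq q) with h1 | h1 | ⟨j, hj, hlt⟩
  · exact Or.inl h1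
  · exact Or.inr h1
  · exact (key j n hn hj hlt).elim

/-- The case of a non-periodic `α`: if `α` is not univoque, then some reflected tail of `α` after a
nonzero digit has value `> 1`. -/
lemma exists_big_mirror {M : ℕ} {q : ℝ} (h : IsTopDigit M q) (hnp : ∀ n, qgRem q 1 (n + 1) < 1)
    (hα : alphaSeq q ∉ USeq q) :
    ∃ k, 0 < alphaSeq q k ∧ 1 < M / (q - 1) - qgRem q 1 (k + 1) := by
  have hq := h.one_lt
  have hle := alphaSeq_le h
  rw [mem_USeq_iff h] at hα
  simp only [val_tail_alpha h] at hα
  have hex : ∃ n, 0 < alphaSeq q n ∧ 1 ≤ M / (q - 1) - qgRem q 1 (n + 1) := by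
    by_contra! hcon
    exact hα ⟨hle, fun n => ⟨fun _ => hnp n, hcon n⟩⟩
  obtain ⟨n, hn, hv⟩ := hex
  rcases hv.lt_or_eq with hv | hv
  · exact ⟨n, hn, hv⟩
  -- The reflected tail `β` is an expansion of `1`; its first difference from `α` supplies the place.
  set β := mirror M (tail (alphaSeq q) (n + 1)) with hβ
  have hβM : ∀ i, β i ≤ M := mirror_le M _
  have hβv : val q β = 1 := by
    rw [hβ, val_mirror hq (c := tail (alphaSeq q) (n + 1)) (fun i => hle _), val_tail_alpha h, ← hv]
  rcases lexLt_trichotomy β (alphaSeq q) with ⟨j, hj, hlt⟩ | heq | ⟨j, hj, hlt⟩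
  · refine ⟨n + 1 + j, ?_, ?_⟩
    · have := hle j
      have h1 : β j = M - alphaSeq q (n + 1 + j) := rfl
      omega
    · have h1 := val_split_digit hq hβM j
      have h2 := val_split_digit hq hle j
      rw [val_alpha h, ← hβv, h1, psum_congr q hj, add_right_inj, div_left_inj' (by positivity),
        val_tail_alpha h, hβ, show tail (mirror M (tail (alphaSeq q) (n + 1))) (j + 1) =
          mirror M (tail (tail (alphaSeq q) (n + 1)) (j + 1)) from rfl, tail_tail,
        val_mirror hq (c := tail (alphaSeq q) _) (fun i => hle _), val_tail_alpha h, ← hβ] at h2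
      have h3 : (β j : ℝ) + 1 ≤ alphaSeq q j := by exact_mod_cast hlt
      have h4 := (qgRem_mem h (j + 1)).1
      rw [← add_assoc] at h2
      linarith
  · have : tail (alphaSeq q) (n + 1 + n + 1) = alphaSeq q := by
      ext i
      have h1 := congrFun heq i
      have h2 := congrFun heq (n + 1 + i)
      have h3 := hle i
      have h4 := hle (n + 1 + i)
      have h5 := hle (n + 1 + (n + 1 + i))
      simp only [hβ, mirror, tail] at h1 h2 ⊢
      rw [show n + 1 + n + 1 + i = n + 1 + (n + 1 + i) by ring]
      omega
    have h1 := val_tail_alpha h (n + 1 + n + 1)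
    rw [this, val_alpha h] at h1
    linarith [hnp (n + 1 + n)]
  · have h1 := le_val_of_gt hq hβM hj hlt
    have h2 := val_nonneg hq (tail β (j + 1))
    have h3 := hnp j
    rw [psum_alpha h, hβv] at h1
    have : qgRem q 1 (j + 1) / q ^ (j + 1) < (1 + val q (tail β (j + 1))) / q ^ (j + 1) := by
      gcongr; linarith
    linarith

/-- In the non-periodic case, for `r` slightly larger than `q`, a tail exceeding `α` would share a
long prefix with `α`, and one of its own reflected tails would then have `r`-value `> 1`. -/
lemma exists_base_nonperiodic {M : ℕ} {q : ℝ} (h : IsTopDigit M q) (hq : q < M + 1)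
    (hnp : ∀ n, qgRem q 1 (n + 1) < 1) (hα : alphaSeq q ∉ USeq q) :
    ∃ r, q < r ∧ IsTopDigit M r ∧ ∀ c ∈ USeq r, ∀ n, c n < M →
      lexLt (tail c (n + 1)) (alphaSeq q) ∨ tail c (n + 1) = alphaSeq q := by
  have hq1 := h.one_lt
  have hq0 : q ≠ 0 := by linarith
  have hq10 : q - 1 ≠ 0 := by linarith
  obtain ⟨k, hk, hbig⟩ := exists_big_mirror h hnp hα
  set α := alphaSeq q with hαdef
  obtain ⟨K, hK⟩ : ∃ K : ℕ, (M / (q - 1)) / q ^ K < M / (q - 1) - qgRem q 1 (k + 1) - 1 := by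
    have h3 : Filter.Tendsto (fun n : ℕ => ((M : ℝ) / (q - 1)) / q ^ n) Filter.atTop (nhds 0) :=
      (tendsto_pow_atTop_atTop_of_one_lt hq1).const_div_atTop _
    exact (h3.eventually_lt_const (by linarith)).exists
  have hev : ∀ᶠ r in nhds q,
      1 < M / (r - 1) - (psum r (tail α (k + 1)) K + (M / (r - 1)) / r ^ K) := by
    have hc1 := continuousAt_psum hq1 (tail α (k + 1)) K
    have hc : ContinuousAt (fun r : ℝ =>
        (M : ℝ) / (r - 1) - (psum r (tail α (k + 1)) K + (M / (r - 1)) / r ^ K)) q := by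
      fun_prop (disch := simp [hq0])
    refine hc.eventually_const_lt ?_
    have h1 := val_split hq1 (M := M) (c := tail α (k + 1)) (fun i => alphaSeq_le h _) K
    rw [val_tail_alpha h] at h1
    have h2 : 0 ≤ val q (tail (tail α (k + 1)) K) / q ^ K :=
      div_nonneg (val_nonneg hq1 _) (by positivity)
    linarith
  obtain ⟨r, hqr, hr, hw, hε⟩ := exists_right_of_eventually h hq
    ((eventually_word_gt h (k + 1 + K) fun j _ => hnp j).and hev)
  refine ⟨r, hqr, hr, fun c hc n hn => ?_⟩
  rw [mem_USeq_iff hr] at hc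
  obtain ⟨hcM, H⟩ := hc
  have hr1 := hr.one_lt
  rcases lexLt_trichotomy (tail c (n + 1)) α with h1 | h1 | ⟨j, hj, hlt⟩
  · exact Or.inl h1
  · exact Or.inr h1
  exfalso
  have hL := not_exceed hr hw (d := tail c (n + 1)) (fun i => hcM _) ((H n).1 hn) hj hlt
  have h1 := (H (n + 1 + k)).2 (by have := hj k (by omega); simp only [tail] at this; omega)
  have h2 := val_split hr1 (M := M) (c := tail c (n + 1 + k + 1)) (fun i => hcM _) K
  have h3 := val_le hr1 (M := M) (c := tail (tail c (n + 1 + k + 1)) K) (fun i => hcM _)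
  have h4 : psum r (tail c (n + 1 + k + 1)) K = psum r (tail α (k + 1)) K := by
    refine psum_congr r fun i hi => ?_
    have := hj (k + 1 + i) (by omega)
    simp only [tail] at this ⊢
    rw [this]; congr 1; omega
  have h5 : val r (tail (tail c (n + 1 + k + 1)) K) / r ^ K ≤ (M / (r - 1)) / r ^ K := by
    gcongr
  rw [h4] at h2
  linarith

/-! ### Univoque bases -/

/-- Arbitrarily long prefixes of `α` have no border: each proper suffix of the prefix of length `m`
is strictly smaller than the prefix of the same length. -/
lemma exists_unbordered {α : ℕ → ℕ} (hα : ∀ k, lexLt (tail α (k + 1)) α) (N : ℕ) :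
    ∃ m, N ≤ m ∧ 2 ≤ m ∧ ∀ k, 1 ≤ k → k < m →
      ∃ j, k + j < m ∧ (∀ i < j, α (k + i) = α i) ∧ α (k + j) < α j := by
  classical
  have hα' : ∀ k, 1 ≤ k → ∃ j, (∀ i < j, α (k + i) = α i) ∧ α (k + j) < α j := by
    intro k hk
    obtain ⟨k, rfl⟩ := Nat.exists_eq_add_of_le' hk
    exact hα k
  let m₀ := max N 2
  have hN : N ≤ m₀ := le_max_left _ _
  have h2 : 2 ≤ m₀ := le_max_right _ _
  by_cases hgood : ∃ k, 1 ≤ k ∧ k < m₀ ∧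
      ¬ ∃ j, k + j < m₀ ∧ (∀ i < j, α (k + i) = α i) ∧ α (k + j) < α j
  swap
  · push Not at hgood
    exact ⟨m₀, hN, h2, hgood⟩
  -- Extend the prefix up to the place where its longest border breaks off.
  let k := Nat.find hgood
  obtain ⟨hk1, hkm, hkbad⟩ : 1 ≤ k ∧ k < m₀ ∧
    ¬ ∃ j, k + j < m₀ ∧ (∀ i < j, α (k + i) = α i) ∧ α (k + j) < α j := Nat.find_spec hgood
  obtain ⟨j₀, hj₀, hlt₀⟩ := hα' k hk1
  have hj₀m : m₀ ≤ k + j₀ := by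
    by_contra! hcon; exact hkbad ⟨j₀, hcon, hj₀, hlt₀⟩
  refine ⟨k + j₀ + 1, by omega, by omega, fun k' hk'1 hk'm => ?_⟩
  rcases lt_trichotomy k' k with hlt | rfl | hgt
  · have := Nat.find_min hgood hlt
    push Not at this
    obtain ⟨j, hj, hrest⟩ := this hk'1 (by omega)
    exact ⟨j, by omega, hrest⟩
  · exact ⟨j₀, by omega, hj₀, hlt₀⟩
  · obtain ⟨t, rfl⟩ := Nat.exists_eq_add_of_le hgt.le
    obtain ⟨j₁, hj₁, hlt₁⟩ := hα' t (by omega)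
    rcases lt_or_ge (t + j₁) j₀ with hc | hc
    · refine ⟨j₁, by omega, fun i hi => ?_, ?_⟩
      · rw [add_assoc, hj₀ _ (by omega), hj₁ i hi]
      · rw [add_assoc, hj₀ _ hc]; exact hlt₁
    · obtain ⟨j, rfl⟩ := Nat.exists_eq_add_of_le (show t ≤ j₀ by omega)
      refine ⟨j, by omega, fun i hi => ?_, ?_⟩
      · rw [add_assoc, hj₀ _ (by omega), hj₁ i (by omega)]
      · rw [add_assoc]
        refine lt_of_lt_of_le hlt₀ ?_
        rcases (show j ≤ j₁ by omega).eq_or_lt with rfl | h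
        · exact hlt₁.le
        · exact (hj₁ j h).le

/-- Digits of the block sequence attached to `s : ℕ → Bool`. Let `w` be the prefix of `α` of
length `m` and `w⁺` the same word with its last digit increased by `1`. Block `i` is `w` if
`s_i = s_{i+1}` and `w⁺` otherwise, reflected if `s_i` is true. -/
def blockDigit (M m : ℕ) (α : ℕ → ℕ) (s : ℕ → Bool) (i j : ℕ) : ℕ :=
  let x := α j + (if j + 1 = m ∧ s i ≠ s (i + 1) then 1 else 0)
  if s i then M - x else x

/-- The concatenation of the blocks `blockDigit M m α s i`, `i = 0, 1, …`. -/
def blockSeq (M m : ℕ) (α : ℕ → ℕ) (s : ℕ → Bool) (n : ℕ) : ℕ :=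
  blockDigit M m α s (n / m) (n % m)

lemma blockSeq_apply {M m : ℕ} {α : ℕ → ℕ} {s : ℕ → Bool} (i : ℕ) {j : ℕ} (hj : j < m) :
    blockSeq M m α s (m * i + j) = blockDigit M m α s i j := by
  rw [blockSeq, Nat.mul_add_div (by omega), Nat.div_eq_of_lt hj, Nat.mul_add_mod,
    Nat.mod_eq_of_lt hj, add_zero]

/-- The first `m` digits of `d` form a word that is at most `w⁺`. -/
def WordLe (m : ℕ) (α d : ℕ → ℕ) : Prop :=
  (∃ j < m, (∀ i < j, d i = α i) ∧ d j < α j) ∨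
    ((∀ i, i + 1 < m → d i = α i) ∧ ∀ i, i + 1 = m → d i ≤ α i + 1)

/-- Every subword of length `m` of a block sequence is at most `w⁺`. A subword meeting two blocks
consists of a suffix of the first and a proper prefix of the second; the former is compared by
means of the absence of borders, the latter by means of the bounds on the reflected tails of
`α`. -/
lemma wordLe_block {M m : ℕ} {α : ℕ → ℕ} (s : ℕ → Bool) (hαM : ∀ i, α i ≤ M) (hα0 : α 0 = M)
    (hM : 0 < M) (hm : 2 ≤ m)
    (hub : ∀ k, 1 ≤ k → k < m →
      ∃ j, k + j < m ∧ (∀ i < j, α (k + i) = α i) ∧ α (k + j) < α j)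
    (hmir : ∀ k, lexLt (mirror M (tail α (k + 1))) α) (n : ℕ) :
    WordLe m α (tail (blockSeq M m α s) n) := by
  obtain ⟨i, k, hk, rfl⟩ : ∃ i k, k < m ∧ n = m * i + k :=
    ⟨n / m, n % m, Nat.mod_lt _ (by omega), (Nat.div_add_mod n m).symm⟩
  have hlast : ∀ a, a + 1 = m → α a < M := by
    intro a ha
    obtain ⟨j, hj, -, hlt⟩ := hub a (by omega) (by omega)
    obtain rfl : j = 0 := by omega
    rwa [add_zero, hα0] at hlt
  set d := tail (blockSeq M m α s) (m * i + k) with hd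
  have hd1 : ∀ j, k + j < m → d j = blockDigit M m α s i (k + j) := by
    intro j hj
    rw [hd, tail, add_assoc, blockSeq_apply i hj]
  have hd2 : ∀ j, j < k → d (m - k + j) = blockDigit M m α s (i + 1) j := by
    intro j hj
    rw [hd, tail, ← blockSeq_apply (i + 1) (by omega : j < m)]
    congr 1
    rw [mul_add]; omega
  -- How a prefix of the reflected word compares with the rest of `w`.
  have hcmp : 1 ≤ k → (∀ j < k, d (m - k + j) = M - α j) → (∀ j, k + j < m → d j = α j) →
      WordLe m α d := by
    intro hk1 h2 h1
    obtain ⟨j', hj', hlt'⟩ := hmir (m - k - 1)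
    simp only [mirror, tail] at hj' hlt'
    rw [show m - k - 1 + 1 = m - k by omega] at hj' hlt'
    have hagree : ∀ a, a < m - k + j' → a < m → d a = α a := by
      intro a ha ham
      rcases lt_or_ge a (m - k) with hak | hak
      · exact h1 a (by omega)
      · obtain ⟨b, rfl⟩ := Nat.exists_eq_add_of_le hak
        rw [h2 b (by omega)]
        have := hj' b (by omega)
        rw [← this]
        have := hαM (m - k + b)
        omega
    rcases lt_or_ge j' k with hjk | hjk
    · refine Or.inl ⟨m - k + j', by omega, fun a ha => hagree a ha (by omega), ?_⟩
      rw [h2 j' hjk]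
      have := hαM (m - k + j')
      have := hαM j'
      omega
    · refine Or.inr ⟨fun a ha => hagree a (by omega) (by omega), fun a ha => ?_⟩
      rw [hagree a (by omega) (by omega)]; omega
  rcases Nat.eq_zero_or_pos k with rfl | hk1
  · simp only [zero_add] at hd1
    cases hs : s i
    · refine Or.inr ⟨fun a ha => ?_, fun a ha => ?_⟩
      · rw [hd1 a (by omega), blockDigit]
        simp only [hs]
        rw [if_neg (by omega : ¬ (a + 1 = m ∧ _))]; simp
      · rw [hd1 a (by omega), blockDigit]
        simp only [hs]
        split_ifs <;> simp_all
    · refine Or.inl ⟨0, by omega, by simp, ?_⟩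
      rw [hd1 0 (by omega), blockDigit]
      simp only [hs, if_true, hα0]
      omega
  have hnl : ∀ j < k, d (m - k + j) = if s (i + 1) then M - α j else α j := by
    intro j hj
    rw [hd2 j hj, blockDigit]
    simp only [show ¬ (j + 1 = m) by omega, false_and, if_false, add_zero]
  cases hs : s i <;> cases hs' : s (i + 1)
  · have hd3 : ∀ j, k + j < m → d j = α (k + j) := by
      intro j hj; rw [hd1 j hj, blockDigit]; simp [hs, hs']
    obtain ⟨j, hj, heq, hlt⟩ := hub k hk1 hk
    refine Or.inl ⟨j, by omega, fun a ha => ?_, ?_⟩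
    · rw [hd3 a (by omega), heq a ha]
    · rwa [hd3 j hj]
  · have hd3 : ∀ j, k + j + 1 < m → d j = α (k + j) := by
      intro j hj; rw [hd1 j (by omega), blockDigit]
      simp [hs, show ¬ (k + j + 1 = m) by omega]
    have hd4 : ∀ j, k + j + 1 = m → d j = α (k + j) + 1 := by
      intro j hj; rw [hd1 j (by omega), blockDigit]; simp [hs, hs', hj]
    obtain ⟨j, hj, heq, hlt⟩ := hub k hk1 hk
    rcases lt_or_eq_of_le (show k + j + 1 ≤ m by omega) with hj' | hj'
    · refine Or.inl ⟨j, by omega, fun a ha => ?_, ?_⟩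
      · rw [hd3 a (by omega), heq a ha]
      · rwa [hd3 j hj']
    · rcases lt_or_eq_of_le (show α (k + j) + 1 ≤ α j by omega) with hlt' | hlt'
      · refine Or.inl ⟨j, by omega, fun a ha => ?_, ?_⟩
        · rw [hd3 a (by omega), heq a ha]
        · rwa [hd4 j hj']
      · refine hcmp hk1 (fun b hb => by rw [hnl b hb, hs']; simp) fun a ha => ?_
        rcases lt_or_eq_of_le (show k + a + 1 ≤ m by omega) with ha' | ha'
        · rw [hd3 a ha', heq a (by omega)]
        · obtain rfl : a = j := by omega
          rw [hd4 a ha', hlt']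
  · have hd3 : ∀ j, k + j + 1 < m → d j = M - α (k + j) := by
      intro j hj; rw [hd1 j (by omega), blockDigit]
      simp [hs, show ¬ (k + j + 1 = m) by omega]
    have hd4 : ∀ j, k + j + 1 = m → d j = M - (α (k + j) + 1) := by
      intro j hj; rw [hd1 j (by omega), blockDigit]; simp [hs, hs', hj]
    obtain ⟨j, hj, hlt⟩ := hmir (k - 1)
    simp only [mirror, tail] at hj hlt
    rw [show k - 1 + 1 = k by omega] at hj hlt
    rcases lt_or_ge (k + j + 1) m with hjm | hjm
    · refine Or.inl ⟨j, by omega, fun a ha => ?_, ?_⟩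
      · rw [hd3 a (by omega), hj a ha]
      · rwa [hd3 j hjm]
    · obtain ⟨e, he⟩ : ∃ e, k + e + 1 = m := ⟨m - k - 1, by omega⟩
      refine Or.inl ⟨e, by omega, fun a ha => ?_, ?_⟩
      · rw [hd3 a (by omega), hj a (by omega)]
      · rw [hd4 e he]
        have h1 : M - α (k + e) ≤ α e := by
          rcases lt_or_eq_of_le (show e ≤ j by omega) with h | rfl
          · exact (hj e h).le
          · exact hlt.le
        have := hlast (k + e) he
        omega
  · have hd3 : ∀ j, k + j < m → d j = M - α (k + j) := by
      intro j hj; rw [hd1 j hj, blockDigit]; simp [hs, hs']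
    obtain ⟨j, hj, hlt⟩ := hmir (k - 1)
    simp only [mirror, tail] at hj hlt
    rw [show k - 1 + 1 = k by omega] at hj hlt
    rcases lt_or_ge (k + j) m with hjm | hjm
    · refine Or.inl ⟨j, by omega, fun a ha => ?_, ?_⟩
      · rw [hd3 a (by omega), hj a ha]
      · rwa [hd3 j hjm]
    · refine hcmp hk1 (fun b hb => by rw [hnl b hb, hs']; simp) fun a ha => ?_
      rw [hd3 a ha, hj a (by omega)]

lemma mirror_blockSeq {M m : ℕ} {α : ℕ → ℕ} {s : ℕ → Bool}
    (hle : ∀ t n, blockSeq M m α t n ≤ M) :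
    mirror M (blockSeq M m α s) = blockSeq M m α (fun i => !s i) := by
  ext n
  have h1 := hle s n
  have h2 := hle (fun i => !s i) n
  simp only [mirror, blockSeq, blockDigit] at *
  by_cases hc : n % m + 1 = m ∧ s (n / m) ≠ s (n / m + 1)
  · have hc' : n % m + 1 = m ∧ (!s (n / m)) ≠ (!s (n / m + 1)) := ⟨hc.1, by simpa using hc.2⟩
    rw [if_pos hc] at *
    rw [if_pos hc'] at *
    cases hs : s (n / m) <;> (simp [hs] at *; try omega)
  · have hc' : ¬ (n % m + 1 = m ∧ (!s (n / m)) ≠ (!s (n / m + 1))) := by simpa using hc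
    rw [if_neg hc] at *
    rw [if_neg hc'] at *
    cases hs : s (n / m) <;> (simp [hs] at *; try omega)

lemma blockSeq_le {M m : ℕ} {α : ℕ → ℕ} (hαM : ∀ i, α i ≤ M)
    (hlast : ∀ a, a + 1 = m → α a < M) (s : ℕ → Bool) (n : ℕ) : blockSeq M m α s n ≤ M := by
  simp only [blockSeq, blockDigit]
  split_ifs with h1 h2 h2
  · omega
  · omega
  · exact hlast _ h2.1
  · exact hαM _

/-- For a univoque base that is not an integer, all tails of `α` and of its reflection have value
`< 1`. -/
lemma rem_lt_of_univoque {M : ℕ} {q : ℝ} (h : IsTopDigit M q) (hq : q < M + 1)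
    (hα : alphaSeq q ∈ USeq q) (n : ℕ) :
    qgRem q 1 (n + 1) < 1 ∧ M / (q - 1) - qgRem q 1 (n + 1) < 1 := by
  rw [mem_USeq_iff h] at hα
  simp only [val_tail_alpha h] at hα
  obtain ⟨-, H⟩ := hα
  refine ⟨lt_of_le_of_ne (qgRem_mem h _).2 fun he => ?_, ?_⟩
  · have := (H n).1 (alphaSeq_lt_of_rem h hq he)
    linarith
  · induction n with
    | zero => exact (H 0).2 (by rw [alphaSeq_zero h]; exact h.pos)
    | succ n ih =>
      rcases Nat.eq_zero_or_pos (alphaSeq q (n + 1)) with h0 | h0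
      · -- Remainders grow while the digits vanish.
        rw [qgRem_succ, h0]
        have := (qgRem_mem h (n + 1)).1
        have := h.one_lt
        push_cast
        nlinarith
      · exact (H (n + 1)).2 h0

/-- In a base `r > q` the value of `α(q)` is below `1`, so a long enough prefix of `α(q)`, with its
last digit increased by `1` and followed by arbitrary digits, still has `r`-value below `1`. -/
lemma exists_length {M : ℕ} {q r : ℝ} (hq : IsTopDigit M q) (hqr : q < r) :
    ∃ N, ∀ m, N ≤ m → psum r (alphaSeq q) m + (1 + M / (r - 1)) / r ^ m < 1 := by
  have hq1 := hq.one_lt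
  have hr1 : 1 < r := hq1.trans hqr
  set α := alphaSeq q with hα
  have hlt : val r α < 1 := by
    have h0 : (α 0 : ℝ) / r ^ (0 + 1) < (α 0 : ℝ) / q ^ (0 + 1) := by
      rw [hα, alphaSeq_zero hq]
      have := hq.pos
      gcongr
    rw [← val_alpha hq]
    refine Summable.tsum_lt_tsum (i := 0) (fun i => ?_) h0
      (summable_digits hr1 (alphaSeq_le hq)) (summable_digits hq1 (alphaSeq_le hq))
    gcongr
  have h3 : Filter.Tendsto (fun n : ℕ => (1 + (M : ℝ) / (r - 1)) / r ^ n) Filter.atTop (nhds 0) :=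
    (tendsto_pow_atTop_atTop_of_one_lt hr1).const_div_atTop _
  obtain ⟨N, hN⟩ := Filter.eventually_atTop.1
    (h3.eventually_lt_const (show 0 < 1 - val r α by linarith))
  refine ⟨N, fun m hm => ?_⟩
  have h1 := val_split hr1 (alphaSeq_le hq) m
  have h2 : 0 ≤ val r (tail α m) / r ^ m := div_nonneg (val_nonneg hr1 _) (by positivity)
  rw [← hα] at h1
  linarith [hN m hm]

lemma val_lt_or_lexLt {M m : ℕ} {r : ℝ} (hr : 1 < r) (hm : 0 < m) {α d : ℕ → ℕ}
    (hd : ∀ i, d i ≤ M) (hα : psum r α m + (1 + M / (r - 1)) / r ^ m < 1) (hw : WordLe m α d) :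
    val r d < 1 ∨ lexLt d α := by
  rcases hw with ⟨j, -, hj⟩ | ⟨h1, h2⟩
  · exact Or.inr ⟨j, hj⟩
  obtain ⟨a, rfl⟩ : ∃ a, m = a + 1 := ⟨m - 1, by omega⟩
  left
  rw [val_split_digit hr hd a, psum_congr r (d := α) (fun i hi => h1 i (by omega))]
  rw [psum_succ, add_assoc, ← add_div] at hα
  refine lt_of_le_of_lt ?_ hα
  have h3 : (d a : ℝ) ≤ α a + 1 := by exact_mod_cast h2 a rfl
  have h4 := val_le hr (M := M) (c := tail d (a + 1)) (fun i => hd _)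
  gcongr ?_ + ?_ / _
  · exact le_rfl
  · linarith

lemma not_countable_diff {M : ℕ} {q r : ℝ} (hq : IsTopDigit M q) (hqr : q < r)
    (hr : IsTopDigit M r) (hα : alphaSeq q ∈ USeq q) : ¬ (USeq r \ USeq q).Countable := by
  have hq1 := hq.one_lt
  have hr1 := hr.one_lt
  have hqM : q < M + 1 := lt_of_lt_of_le hqr hr.le
  have hrem := rem_lt_of_univoque hq hqM hα
  obtain ⟨N, hN⟩ := exists_length hq hqr
  set α := alphaSeq q with hαdef
  have hαM : ∀ i, α i ≤ M := alphaSeq_le hq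
  have hα0 : α 0 = M := alphaSeq_zero hq
  have hM := hq.pos
  have hlex : ∀ k, lexLt (tail α (k + 1)) α := fun k =>
    lexLt_alpha_of_val_lt hq (fun i => hαM _) (by rw [val_tail_alpha hq]; exact (hrem k).1)
  have hmir : ∀ k, lexLt (mirror M (tail α (k + 1))) α := fun k =>
    lexLt_alpha_of_val_lt hq (mirror_le M _) (by
      rw [val_mirror hq1 (c := tail α (k + 1)) (fun i => hαM _), val_tail_alpha hq]
      exact (hrem k).2)
  obtain ⟨m, hNm, hm2, hub⟩ := exists_unbordered hlex N
  have hlast : ∀ a, a + 1 = m → α a < M := by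
    intro a ha
    obtain ⟨j, hj, -, hlt⟩ := hub a (by omega) (by omega)
    obtain rfl : j = 0 := by omega
    rwa [add_zero, hα0] at hlt
  have hbM : ∀ s n, blockSeq M m α s n ≤ M := blockSeq_le hαM hlast
  have hα1 : ∀ n, psum r α n < 1 := by
    intro n
    refine lt_of_le_of_lt ?_ (psum_alpha_lt hq n)
    unfold psum
    gcongr
  -- A leading `0` is followed by `w⁺`, which violates univoqueness in base `q`.
  let s : (ℕ → Bool) → ℕ → Bool := fun t i =>
    if i = 0 then false else if i = 1 then true else t (i - 2)
  let c : (ℕ → Bool) → ℕ → ℕ := fun t n => if n = 0 then 0 else blockSeq M m α (s t) (n - 1)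
  have htail : ∀ t n, tail (c t) (n + 1) = tail (blockSeq M m α (s t)) n := by
    intro t n; ext i
    simp only [tail, c]
    rw [if_neg (by omega)]
    congr 1; omega
  have hcM : ∀ t n, c t n ≤ M := by
    intro t n
    simp only [c]; split_ifs
    · exact Nat.zero_le _
    · exact hbM _ _
  have hval : ∀ t n, val r (tail (blockSeq M m α t) n) < 1 ∨
      lexLt (tail (blockSeq M m α t) n) α := fun t n =>
    val_lt_or_lexLt hr1 (by omega) (fun i => hbM _ _) (hN m hNm)
      (wordLe_block t hαM hα0 hM hm2 hub hmir n)
  have hcr : ∀ t, c t ∈ USeq r := by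
    intro t
    rw [mem_USeq_iff hr]
    have hmt : ∀ n, tail (mirror M (c t)) (n + 1) = mirror M (tail (c t) (n + 1)) := fun n => rfl
    refine ⟨hcM t, fun n => ⟨?_, ?_⟩⟩
    · exact parry hr1 (hcM t) hαM hα1 (fun n _ => by rw [htail]; exact hval _ _) n
    · have h1 := parry hr1 (mirror_le M (c t)) hαM hα1 (fun n _ => by
        rw [hmt, htail, show mirror M (tail (blockSeq M m α (s t)) n)
          = tail (mirror M (blockSeq M m α (s t))) n from rfl, mirror_blockSeq hbM]
        exact hval _ _) n
      intro hn
      rw [hmt, val_mirror hr1 (c := tail (c t) (n + 1)) (fun i => hcM t _)] at h1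
      exact h1 (by have := hcM t n; simp only [mirror]; omega)
  have hcq : ∀ t, c t ∉ USeq q := by
    intro t hc
    rw [mem_USeq_iff hq] at hc
    have h1 := (hc.2 0).1 (by simpa [c] using hM)
    rw [htail] at h1
    obtain ⟨a, rfl⟩ : ∃ a, m = a + 1 := ⟨m - 1, by omega⟩
    have hd : ∀ i, i < a + 1 →
        tail (blockSeq M (a + 1) α (s t)) 0 i = blockDigit M (a + 1) α (s t) 0 i := by
      intro i hi
      rw [tail, ← blockSeq_apply 0 hi, mul_zero]
    have h2 := le_val_of_gt hq1 (d := tail (blockSeq M (a + 1) α (s t)) 0) (δ := α) (j := a)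
      (fun i => hbM _ _)
      (fun i hi => by rw [hd i (by omega), blockDigit]; simp [s, show i ≠ a by omega])
      (by rw [hd a (by omega), blockDigit]; simp [s])
    have h3 := val_nonneg hq1 (tail (tail (blockSeq M (a + 1) α (s t)) 0) (a + 1))
    have h4 := (qgRem_mem hq (a + 1)).2
    rw [psum_alpha hq] at h2
    have : qgRem q 1 (a + 1) / q ^ (a + 1) ≤
        (1 + val q (tail (tail (blockSeq M (a + 1) α (s t)) 0) (a + 1))) / q ^ (a + 1) := by
      gcongr; linarith
    linarith
  have hinj : Function.Injective c := by
    intro t t' htt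
    ext1 i
    -- The first digit of block `i + 2` is `0` or `M` according to the bit `i`.
    have h1 : ∀ u, c u (m * (i + 2) + 1) = if u i then 0 else M := by
      intro u
      simp only [c]
      rw [if_neg (by omega), Nat.add_sub_cancel, ← add_zero (m * (i + 2)),
        blockSeq_apply (i + 2) (by omega), blockDigit]
      simp [s, show ¬ (1 = m) by omega, hα0]
    have h2 := h1 t
    rw [htt, h1 t'] at h2
    cases ht : t i <;> cases ht' : t' i <;> simp [ht, ht'] at h2 ⊢ <;> omega
  intro hcount
  have h1 : (Set.range c).Countable := hcount.mono (by
    rintro _ ⟨t, rfl⟩; exact ⟨hcr t, hcq t⟩)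
  have h2 : (Set.univ : Set (ℕ → Bool)).Countable := by
    rw [← Set.image_univ] at h1
    exact Set.countable_of_injective_of_countable_image hinj.injOn h1
  have h3 : Countable (ℕ → Bool) := Set.countable_univ_iff.1 h2
  obtain ⟨f, hf⟩ := exists_surjective_nat (ℕ → Bool)
  obtain ⟨k, hk⟩ := hf fun i => !f i i
  have := congrFun hk k
  simp at this

/-- Corollary 2.3. A real number `q > 1` belongs to `𝒰` iff for every `r > q`
with `⌈q⌉ = ⌈r⌉` the set `𝒰_r' \ 𝒰_q'` is uncountable. -/
theorem mem_univBases_iff_uncountable_diff (q : ℝ) (hq : 1 < q) :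
    q ∈ UnivBases ↔
      ∀ r : ℝ, q < r → ⌈q⌉ = ⌈r⌉ → ¬ (USeq r \ USeq q).Countable := by
  have hM := isTopDigit_topDigit hq
  rw [mem_univBases_iff_alpha hM]
  constructor
  · intro hα r hqr hceil
    have hr := isTopDigit_topDigit (hq.trans hqr)
    have : topDigit r = topDigit q := by rw [topDigit, topDigit, hceil]
    rw [this] at hr
    exact not_countable_diff hM hqr hr hα
  · intro H
    by_contra hα
    have hlt : q < topDigit q + 1 := by
      refine lt_of_le_of_ne hM.le fun he => hα ?_
      -- For an integer base, all remainders are `1` and `α = M^∞`.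
      have hrem : ∀ n, qgRem q 1 n = 1 := by
        intro n
        induction n with
        | zero => rfl
        | succ n ih =>
          rw [qgRem_succ, ih, alphaSeq_of_rem_eq_one hM ih]
          linarith
      have hend : (topDigit q : ℝ) / (q - 1) = 1 := by
        rw [div_eq_one_iff_eq (by linarith)]; linarith
      rw [mem_USeq_iff hM]
      refine ⟨alphaSeq_le hM, fun n => ⟨fun hn => ?_, fun _ => ?_⟩⟩
      · exact absurd (alphaSeq_of_rem_eq_one hM (hrem n)) hn.ne
      · rw [val_tail_alpha hM, hrem, hend]; norm_num
    have hex : ∃ r, q < r ∧ IsTopDigit (topDigit q) r ∧ ∀ c ∈ USeq r, ∀ n, c n < topDigit q →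
        lexLt (tail c (n + 1)) (alphaSeq q) ∨ tail c (n + 1) = alphaSeq q := by
      by_cases hper : ∃ p, qgRem q 1 (p + 1) = 1
      · exact exists_base_periodic hM hlt hper
      · push Not at hper
        exact exists_base_nonperiodic hM hlt
          (fun n => lt_of_le_of_ne (qgRem_mem hM _).2 (hper n)) hα
    obtain ⟨r, hqr, hr, hrH⟩ := hex
    refine H r hqr ?_ (countable_diff hM hr hrH)
    have e1 : ⌈q⌉ = (topDigit q : ℤ) + 1 := by
      rw [Int.ceil_eq_iff]; push_cast; exact ⟨by linarith [hM.lt], hM.le⟩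
    have e2 : ⌈r⌉ = (topDigit q : ℤ) + 1 := by
      rw [Int.ceil_eq_iff]; push_cast; exact ⟨by linarith [hr.lt], hr.le⟩
    rw [e1, e2]
end

section
/- Let q > 1 be a non-integer real number and let (β_i) = β_1 β_2 ... be the greedy expansion of 1 in base q. For each n ≥ 1 there exists a real number r > q such that the greedy expansion of 1 in base r starts with β_1 ... β_n. -/
open Filter Topology

lemma gRem_one_nonneg (q : ℝ) (hq : 0 ≤ q) (i : ℕ) : 0 ≤ gRem q 1 i := by
  induction i with
  | zero => simp [gRem]
  | succ i ih =>
    have h1 : ((gDigit q (gRem q 1 i) : ℕ) : ℝ) ≤ (⌊q * gRem q 1 i⌋₊ : ℝ) := by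
      exact_mod_cast min_le_right _ _
    have h2 := Nat.floor_le (mul_nonneg hq ih)
    simp only [gRem]
    linarith

lemma topDigit_eventually_eq (q : ℝ) (hni : ∀ k : ℤ, (k : ℝ) ≠ q) :
    ∀ᶠ r in 𝓝[>] q, topDigit r = topDigit q := by
  have hlt : q < ⌈q⌉ := lt_of_le_of_ne (Int.le_ceil q) (hni _).symm
  filter_upwards [Ioo_mem_nhdsGT hlt] with r hr
  have h : ⌈r⌉ = ⌈q⌉ := by
    rw [Int.ceil_eq_iff]
    exact ⟨by linarith [Int.ceil_lt_add_one q, hr.1], hr.2.le⟩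
  simp only [topDigit, h]

/-- Right-continuity of the greedy digit: it is unchanged when `r` decreases to `q` and the
remainder `f r` converges to `y` from above. -/
lemma gDigit_eventually_eq {q y : ℝ} {f : ℝ → ℝ} (hq : 0 < q) (hy : 0 ≤ y)
    (hni : ∀ k : ℤ, (k : ℝ) ≠ q) (hle : ∀ᶠ r in 𝓝[>] q, y ≤ f r)
    (hf : Tendsto f (𝓝[>] q) (𝓝 y)) :
    ∀ᶠ r in 𝓝[>] q, gDigit r (f r) = gDigit q y := by
  have hid : Tendsto (fun r : ℝ => r) (𝓝[>] q) (𝓝 q) := tendsto_id.mono_left nhdsWithin_le_nhds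
  filter_upwards [topDigit_eventually_eq q hni, hle, self_mem_nhdsWithin,
    (hid.mul hf).eventually_lt_const (Nat.lt_floor_add_one (q * y))] with r htop hyr hqr hlt
  have hqy : q * y ≤ r * f r := mul_le_mul (le_of_lt hqr) hyr hy (hq.le.trans (le_of_lt hqr))
  have hqy0 : 0 ≤ q * y := mul_nonneg hq.le hy
  have hfloor : ⌊r * f r⌋₊ = ⌊q * y⌋₊ := by
    rw [Nat.floor_eq_iff (hqy0.trans hqy)]
    exact ⟨(Nat.floor_le hqy0).trans hqy, hlt⟩
  simp only [gDigit, htop, hfloor]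

/-- The remainders in base `r` converge from above to those in base `q` as `r` decreases to `q`. -/
lemma gRem_one_tendsto (q : ℝ) (hq : 0 < q) (hni : ∀ k : ℤ, (k : ℝ) ≠ q) (i : ℕ) :
    (∀ᶠ r in 𝓝[>] q, gRem q 1 i ≤ gRem r 1 i) ∧
      Tendsto (fun r => gRem r 1 i) (𝓝[>] q) (𝓝 (gRem q 1 i)) := by
  induction i with
  | zero => simp [gRem]
  | succ i ih =>
    obtain ⟨hle, hf⟩ := ih
    have hy := gRem_one_nonneg q hq.le i
    have hd := gDigit_eventually_eq hq hy hni hle hf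
    have hid : Tendsto (fun r : ℝ => r) (𝓝[>] q) (𝓝 q) := tendsto_id.mono_left nhdsWithin_le_nhds
    constructor
    · filter_upwards [hle, hd, self_mem_nhdsWithin] with r hyr hdr hqr
      have hqy : q * gRem q 1 i ≤ r * gRem r 1 i :=
        mul_le_mul (le_of_lt hqr) hyr hy (hq.le.trans (le_of_lt hqr))
      simp only [gRem, hdr]
      linarith
    · refine ((hid.mul hf).sub_const (gDigit q (gRem q 1 i) : ℝ)).congr' ?_
      filter_upwards [hd] with r hdr
      simp only [gRem, hdr]

/-- Lemma 2.5, Lemma 3.2 of Komornik–Loreti. Let `q > 1` be a non-integer and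
let `(β_i)` be the greedy expansion of `1` in base `q`. For each `n ≥ 1` there exists `r > q`
such that the greedy expansion of `1` in base `r` starts with `β_1 … β_n`. -/
theorem greedy_one_stable_initial_segment (q : ℝ) (hq : 1 < q)
    (hni : ∀ k : ℤ, (k : ℝ) ≠ q) (n : ℕ) (hn : 1 ≤ n) :
    ∃ r : ℝ, q < r ∧ ∀ i, i < n → greedy r 1 i = greedy q 1 i := by
  have h : ∀ᶠ r in 𝓝[>] q, ∀ i ∈ Finset.range n, greedy r 1 i = greedy q 1 i := by
    rw [eventually_all_finset]
    intro i _
    have hq0 : 0 < q := by linarith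
    obtain ⟨hle, hf⟩ := gRem_one_tendsto q hq0 hni i
    exact gDigit_eventually_eq hq0 (gRem_one_nonneg q hq0.le i) hni hle hf
  obtain ⟨r, hr, hqr⟩ := (h.and self_mem_nhdsWithin).exists
  exact ⟨r, hqr, fun i hi => hr i (Finset.mem_range.2 hi)⟩
end
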